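/- Let q be a prime power and A = ((a,b),(c,d)) an invertible 2×2 matrix over F_{q^2}. If a·c^q ∈ F_q, b·d^q ∈ F_q, and a^q·d − b·c^q = a·d^q − b^q·c, then A^q = (Φ/Δ)·A where Φ = a^q·d − b·c^q and Δ = ad − bc; consequently some nonzero scalar multiple of A has all entries in F_q. -/

import Mathlib

/-!
Write `σ` for the involution `x ↦ x ^ q` of `F_{q²}` and `B = A^q`. Applying `σ` to the products in
the first two hypotheses turns them into `a^q c = a c^q` and `b^q d = b d^q`, so the three
hypotheses together say `adj(A) * B = Φ • 1`; multiplying by `A` on the left gives `Δ • B = Φ • A`.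
Once `σ` multiplies every entry of `A` by the same scalar, it fixes all quotients of the entries
by a nonzero one.
-/

section Matrix

variable {n : Type*} [Fintype n] [DecidableEq n]

theorem det_smul_eq_smul_of_adjugate_mul_eq_smul_one {R : Type*} [CommRing R] {A B : Matrix n n R}
    {r : R} (h : A.adjugate * B = r • (1 : Matrix n n R)) : A.det • B = r • A :=
  calc
    A.det • B = A * (A.adjugate * B) := by
      rw [← Matrix.mul_assoc, Matrix.mul_adjugate, Matrix.smul_mul, Matrix.one_mul]
    _ = r • A := by rw [h, Matrix.mul_smul, Matrix.mul_one]

theorem eq_div_det_smul_of_adjugate_mul_eq_smul_one {K : Type*} [Field K] {A B : Matrix n n K}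
    {r : K} (hA : A.det ≠ 0) (h : A.adjugate * B = r • (1 : Matrix n n K)) :
    B = (r / A.det) • A := by
  rw [div_eq_inv_mul, mul_smul, ← det_smul_eq_smul_of_adjugate_mul_eq_smul_one h,
    inv_smul_smul₀ hA]

theorem adjugate_fin_two_mul_eq_smul_one {R : Type*} [CommRing R] {a b c d a' b' c' d' : R}
    (hac : a' * c = a * c') (hbd : b' * d = b * d') (hdiag : a' * d - b * c' = a * d' - b' * c) :
    (!![a, b; c, d]).adjugate * !![a', b'; c', d'] =
      (a' * d - b * c') • (1 : Matrix (Fin 2) (Fin 2) R) := by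
  have h₀₀ : d * a' + -b * c' = a' * d - b * c' := by ring
  have h₀₁ : d * b' + -b * d' = 0 := by linear_combination hbd
  have h₁₀ : -c * a' + a * c' = 0 := by linear_combination -hac
  have h₁₁ : -c * b' + a * d' = a' * d - b * c' := by linear_combination -hdiag
  rw [Matrix.adjugate_fin_two_of, Matrix.mul_fin_two, h₀₀, h₀₁, h₁₀, h₁₁,
    Matrix.smul_one_eq_diagonal, Matrix.diagonal_fin_two]

end Matrix

section Scaling

variable {K : Type*} [GroupWithZero K] {σ : K →*₀ K} {t : K}

theorem map_inv_mul_eq_self_of_map_eq_mul {x y : K} (hx : x ≠ 0) (hσx : σ x = t * x)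
    (hσy : σ y = t * y) : σ (x⁻¹ * y) = x⁻¹ * y := by
  have ht : t ≠ 0 := left_ne_zero_of_mul (hσx ▸ (map_ne_zero σ).mpr hx)
  rw [map_mul, map_inv₀, hσx, hσy, mul_inv_rev, mul_assoc, inv_mul_cancel_left₀ ht]

theorem exists_ne_zero_map_mul_eq_self_of_map_eq_smul {m n : Type*} {A : Matrix m n K}
    (hA : A ≠ 0) (hσA : A.map σ = t • A) :
    ∃ l : K, l ≠ 0 ∧ ∀ i j, σ (l * A i j) = l * A i j := by
  have hentry (i : m) (j : n) : σ (A i j) = t * A i j := congrFun₂ hσA i j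
  obtain ⟨i₀, j₀, hne⟩ : ∃ i j, A i j ≠ 0 := by
    contrapose! hA
    exact Matrix.ext hA
  exact ⟨(A i₀ j₀)⁻¹, inv_ne_zero hne, fun i j =>
    map_inv_mul_eq_self_of_map_eq_mul hne (hentry i₀ j₀) (hentry i j)⟩

end Scaling

theorem pow_involutive_of_card_eq_sq {K : Type*} [GroupWithZero K] [Fintype K] {q : ℕ}
    (hK : Fintype.card K = q ^ 2) : Function.Involutive fun x : K => x ^ q := fun x => by
  change (x ^ q) ^ q = x
  rw [← pow_mul, ← sq, ← hK, FiniteField.pow_card]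

theorem frobenius_scalar_multiple_general {K : Type*} [Field K] (σ : K →*₀ K)
    (hσ : Function.Involutive σ) (a b c d : K) (hdet : a * d - b * c ≠ 0)
    (hac : σ (a * σ c) = a * σ c) (hbd : σ (b * σ d) = b * σ d)
    (hdiag : σ a * d - b * σ c = a * σ d - σ b * c) :
    (σ a = (σ a * d - b * σ c) / (a * d - b * c) * a ∧
     σ b = (σ a * d - b * σ c) / (a * d - b * c) * b ∧
     σ c = (σ a * d - b * σ c) / (a * d - b * c) * c ∧
     σ d = (σ a * d - b * σ c) / (a * d - b * c) * d) ∧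
    ∃ l : K, l ≠ 0 ∧ σ (l * a) = l * a ∧ σ (l * b) = l * b ∧
      σ (l * c) = l * c ∧ σ (l * d) = l * d := by
  rw [map_mul, hσ] at hac hbd
  let A := !![a, b; c, d]
  have hdetA : A.det = a * d - b * c := Matrix.det_fin_two_of a b c d
  have hA : A.det ≠ 0 := hdetA ▸ hdet
  have hadj : A.adjugate * A.map σ = (σ a * d - b * σ c) • (1 : Matrix (Fin 2) (Fin 2) K) := by
    rw [Matrix.eta_fin_two (A.map σ)]
    exact adjugate_fin_two_mul_eq_smul_one hac hbd hdiag
  have hscale : A.map σ = ((σ a * d - b * σ c) / (a * d - b * c)) • A :=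
    hdetA ▸ eq_div_det_smul_of_adjugate_mul_eq_smul_one hA hadj
  have hA0 : A ≠ 0 := fun h => hA (h ▸ Matrix.det_zero)
  obtain ⟨l, hl, hfix⟩ := exists_ne_zero_map_mul_eq_self_of_map_eq_smul hA0 hscale
  have hentry (i j : Fin 2) : σ (A i j) = _ * A i j := congrFun₂ hscale i j
  exact ⟨⟨hentry 0 0, hentry 0 1, hentry 1 0, hentry 1 1⟩,
    l, hl, hfix 0 0, hfix 0 1, hfix 1 0, hfix 1 1⟩

/-- Let `q` be a prime power and `A = !![a,b;c,d]` an invertible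
matrix over `F_{q²}` (a field `K` with `q²` elements; the subfield `F_q` is the set of
fixed points of `x ↦ x^q`).  If `a c^q ∈ F_q`, `b d^q ∈ F_q` and
`a^q d − b c^q = a d^q − b^q c`, then `A^q = (Φ/Δ) • A` (entrywise `q`-th power), where
`Φ = a^q d − b c^q` and `Δ = ad − bc`; consequently some nonzero scalar multiple of `A`
has all entries in `F_q`. -/
theorem frobenius_scalar_multiple
    (q : ℕ) (hq : ∃ p n : ℕ, p.Prime ∧ 0 < n ∧ q = p ^ n)
    (K : Type*) [Field K] [Fintype K] (hK : Fintype.card K = q ^ 2)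
    (a b c d : K) (hdet : a * d - b * c ≠ 0)
    (h1 : (a * c ^ q) ^ q = a * c ^ q)
    (h2 : (b * d ^ q) ^ q = b * d ^ q)
    (h3 : a ^ q * d - b * c ^ q = a * d ^ q - b ^ q * c) :
    (a ^ q = (a ^ q * d - b * c ^ q) / (a * d - b * c) * a ∧
     b ^ q = (a ^ q * d - b * c ^ q) / (a * d - b * c) * b ∧
     c ^ q = (a ^ q * d - b * c ^ q) / (a * d - b * c) * c ∧
     d ^ q = (a ^ q * d - b * c ^ q) / (a * d - b * c) * d) ∧
    ∃ l : K, l ≠ 0 ∧ (l * a) ^ q = l * a ∧ (l * b) ^ q = l * b ∧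
      (l * c) ^ q = l * c ∧ (l * d) ^ q = l * d := by
  have hq0 : q ≠ 0 := by rintro rfl; simp at hK
  exact frobenius_scalar_multiple_general (powMonoidWithZeroHom hq0)
    (pow_involutive_of_card_eq_sq hK) a b c d hdet h1 h2 h3
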